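/- Let S be a semitopological semigroup and let (S,(K,weak*)) be a nonexpansive dynamical system, where K is a weak* compact convex subset of the dual space X* of an M-embedded Banach space X. Suppose LUC(S) has a left invariant mean and the action π: S × K → K is jointly continuous when K carries the weak* topology. Then there is x ∈ K with sx = x for all s ∈ S, and the fixed point set F(S) = {x ∈ K : sx = x for all s ∈ S} is a nonexpansive retract of K, i.e., there is a map r: K → K with r(K) ⊆ F(S), r ∘ r = r, r fixing F(S) pointwise, and ‖r(x) − r(y)‖ ≤ ‖x − y‖ for all x, y ∈ K. -/

import Mathlib

open Set MeasureTheory BoundedContinuousFunction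

noncomputable section

universe u v

/-- The weak topology on a topological module `X` over `𝕜`: the coarsest topology making all
continuous linear functionals continuous. -/
def weakTop (𝕜 : Type*) (X : Type*) [NontriviallyNormedField 𝕜] [AddCommGroup X]
    [Module 𝕜 X] [TopologicalSpace X] : TopologicalSpace X :=
  ⨅ f : X →L[𝕜] 𝕜, TopologicalSpace.induced (⇑f) inferInstance

/-- A semitopological semigroup: multiplication is separately continuous. -/
def IsSemitopologicalSemigroup (S : Type*) [Semigroup S] [TopologicalSpace S] : Prop :=
  (∀ t : S, Continuous fun s => t * s) ∧ (∀ t : S, Continuous fun s => s * t)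

section CbDefs

variable (S : Type u) [Semigroup S] [TopologicalSpace S]

/-- `g` is the family of left translates of `f`: `g s = L_s f` where `L_s f (t) = f (s * t)`. -/
def IsLTranslates (f : S →ᵇ ℂ) (g : S → S →ᵇ ℂ) : Prop :=
  ∀ s t, g s t = f (s * t)

/-- `LUC(S)`: bounded continuous `f` such that `s ↦ L_s f` is norm continuous. -/
def LUCset : Set (S →ᵇ ℂ) :=
  {f | ∃ g, IsLTranslates S f g ∧ Continuous g}

/-- `AP(S)`: bounded continuous `f` whose set of left translates is relatively compact in the
norm topology of `C(S)`. -/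
def APset : Set (S →ᵇ ℂ) :=
  {f | ∃ g, IsLTranslates S f g ∧ IsCompact (closure (Set.range g))}

/-- `WAP(S)`: bounded continuous `f` whose set of left translates is relatively compact in the
weak topology of `C(S)`. -/
def WAPset : Set (S →ᵇ ℂ) :=
  {f | ∃ g, IsLTranslates S f g ∧
    @IsCompact _ (weakTop ℂ (S →ᵇ ℂ)) (@closure _ (weakTop ℂ (S →ᵇ ℂ)) (Set.range g))}

/-- The topology on `C(S)` induced by the multiplicative means. -/
def lmcTop : TopologicalSpace (S →ᵇ ℂ) :=
  ⨅ μ : {μ : (S →ᵇ ℂ) →L[ℂ] ℂ // ‖μ‖ = 1 ∧ μ 1 = 1 ∧ ∀ f g, μ (f * g) = μ f * μ g},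
    TopologicalSpace.induced (⇑μ.1) inferInstance

/-- `LMC(S)`: bounded continuous `f` such that `s ↦ L_s f` is continuous into `C(S)` with the
topology induced by the multiplicative means. -/
def LMCset : Set (S →ᵇ ℂ) :=
  {f | ∃ g, IsLTranslates S f g ∧ @Continuous _ _ _ (lmcTop S) g}

/-- `Y ⊆ C(S)` has a left invariant mean: there is a norm-one functional `μ` on `C(S)` with
`μ 1 = 1` and `μ (L_s f) = μ f` for all `f ∈ Y` and `s ∈ S`.  (By the Hahn–Banach extension
theorem this is equivalent to the existence of a left invariant mean on the subspace `Y`.) -/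
def HasLIM (Y : Set (S →ᵇ ℂ)) : Prop :=
  ∃ μ : (S →ᵇ ℂ) →L[ℂ] ℂ, ‖μ‖ = 1 ∧ μ 1 = 1 ∧
    ∀ f ∈ Y, ∀ g : S → S →ᵇ ℂ, IsLTranslates S f g → ∀ s, μ (g s) = μ f

end CbDefs

/-- The weak-star topology on the dual of a normed space: the topology of pointwise
convergence. -/
def wstarTop (X : Type*) [SeminormedAddCommGroup X] [NormedSpace ℝ X] :
    TopologicalSpace (StrongDual ℝ X) :=
  TopologicalSpace.induced (fun (f : StrongDual ℝ X) (x : X) => f x) Pi.topologicalSpace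

set_option maxSynthPendingDepth 3 in
/-- A Banach space `X` is `M`-embedded if `X` is an `M`-ideal in its bidual, i.e.
`X*** = X* ⊕₁ X^⊥`. -/
def MEmbeddedSpace (X : Type v) [NormedAddCommGroup X] [NormedSpace ℝ X] : Prop :=
  -- every `F ∈ X***` decomposes as `F = g + H` with `g` in the canonical image of `X*`
  -- and `H ∈ X^⊥`
  (∀ F : StrongDual ℝ (StrongDual ℝ (StrongDual ℝ X)),
    ∃ (g : StrongDual ℝ X)
      (H : StrongDual ℝ (StrongDual ℝ (StrongDual ℝ X))),
      (∀ x : X, H (NormedSpace.inclusionInDoubleDual ℝ X x) = 0) ∧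
      F = NormedSpace.inclusionInDoubleDual ℝ (StrongDual ℝ X) g + H) ∧
  -- and the decomposition is an `ℓ¹`-decomposition
  (∀ (g : StrongDual ℝ X)
      (H : StrongDual ℝ (StrongDual ℝ (StrongDual ℝ X))),
    (∀ x : X, H (NormedSpace.inclusionInDoubleDual ℝ X x) = 0) →
    ‖NormedSpace.inclusionInDoubleDual ℝ (StrongDual ℝ X) g + H‖ =
      ‖NormedSpace.inclusionInDoubleDual ℝ (StrongDual ℝ X) g‖ + ‖H‖)


/-- A functional of norm at most one that kills a finite-dimensional subspace and realises the
distance to it. -/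
lemma exists_dual_infDist {E : Type*} [NormedAddCommGroup E] [NormedSpace ℝ E]
    (F : Submodule ℝ E) [FiniteDimensional ℝ F] (y : E) :
    ∃ f : StrongDual ℝ E, ‖f‖ ≤ 1 ∧ (∀ z ∈ F, f z = 0) ∧ f y = Metric.infDist y F := by
  have : IsClosed (F : Set E) := F.closed_of_finiteDimensional
  obtain ⟨g, hg1, hgy⟩ := exists_dual_vector'' ℝ (F.mkQ y)
  have hle : ∀ x, ‖F.mkQ x‖ ≤ ‖x‖ := fun x => Submodule.Quotient.norm_mk_le F x
  refine ⟨(g.toLinearMap ∘ₗ F.mkQ).mkContinuous 1 fun x => ?_,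
    LinearMap.mkContinuous_norm_le _ zero_le_one _, fun z hz => ?_, ?_⟩
  · exact (g.le_of_opNorm_le hg1 _).trans (by simpa using hle x)
  · simp [(Submodule.Quotient.mk_eq_zero F).2 hz]
  · have := hgy
    simp only [LinearMap.mkContinuous_apply, LinearMap.comp_apply]
    refine this.trans ?_
    exact QuotientAddGroup.norm_mk y

/-- If a bounded weakly continuous image of an open set stays close to a finite-dimensional
subspace, then some smaller open set has image in a small ball. -/
lemma exists_isOpen_image_subset_closedBall_of_infDist_le {Q E : Type*} [TopologicalSpace Q]
    [NormedAddCommGroup E] [NormedSpace ℝ E] {ι : Q → E} {R : ℝ} (hR : ∀ q, ‖ι q‖ ≤ R)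
    (hball : ∀ c r, IsClosed {q | ‖ι q - c‖ ≤ r})
    (F : Submodule ℝ E) [FiniteDimensional ℝ F] {ε : ℝ} (hε : 0 < ε) {W : Set Q}
    (hW : IsOpen W) (hWne : W.Nonempty) (hd : ∀ q ∈ W, Metric.infDist (ι q) F ≤ ε) :
    ∃ V ⊆ W, IsOpen V ∧ V.Nonempty ∧ ∃ c, ∀ q ∈ V, ‖ι q - c‖ ≤ 3 * ε := by
  have hcpt : IsCompact ((F : Set E) ∩ Metric.closedBall 0 (R + 2 * ε)) := by
    have : ProperSpace F := FiniteDimensional.proper ℝ F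
    have h := (isCompact_closedBall (0 : F) (R + 2 * ε)).image continuous_subtype_val
    convert h using 1
    ext x
    simp only [mem_inter_iff, SetLike.mem_coe, Metric.mem_closedBall, dist_zero_right, mem_image]
    constructor
    · rintro ⟨hx, hx'⟩
      exact ⟨⟨x, hx⟩, hx', rfl⟩
    · rintro ⟨y, hy, rfl⟩
      exact ⟨y.2, hy⟩
  obtain ⟨t, -, htfin, ht⟩ := hcpt.finite_cover_balls hε
  by_contra! hcon
  have key : ∀ T : Finset E, ∃ V ⊆ W, IsOpen V ∧ V.Nonempty ∧
      ∀ q ∈ V, ∀ c ∈ T, 3 * ε < ‖ι q - c‖ := by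
    classical
    intro T
    induction T using Finset.induction_on with
    | empty => exact ⟨W, subset_rfl, hW, hWne, by simp⟩
    | insert c T _ ih =>
      obtain ⟨V, hVW, hV, hVne, hVT⟩ := ih
      obtain ⟨q, hq, hqc⟩ := hcon V hVW hV hVne c
      refine ⟨V ∩ {q | ‖ι q - c‖ ≤ 3 * ε}ᶜ, inter_subset_left.trans hVW,
        hV.inter (hball _ _).isOpen_compl, ⟨q, hq, by simpa using hqc⟩, ?_⟩
      rintro p ⟨hp, hpc⟩ d hd
      rcases Finset.mem_insert.1 hd with rfl | hd
      · simpa using hpc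
      · exact hVT p hp d hd
  obtain ⟨V, hVW, -, ⟨q, hq⟩, hVT⟩ := key htfin.toFinset
  obtain ⟨z, hzF, hz⟩ := (Metric.infDist_lt_iff (s := (F : Set E)) ⟨0, F.zero_mem⟩).1
    (show Metric.infDist (ι q) F < 2 * ε by linarith [hd q (hVW hq)])
  rw [dist_eq_norm] at hz
  have hzR : ‖z‖ ≤ R + 2 * ε := by
    have := norm_sub_norm_le z (ι q)
    rw [norm_sub_rev] at this
    linarith [hR q]
  have := ht ⟨hzF, by simpa using hzR⟩
  simp only [mem_iUnion, Metric.mem_ball, dist_eq_norm, exists_prop] at this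
  obtain ⟨c, hc, hzc⟩ := this
  have h1 := hVT q hq c (htfin.mem_toFinset.2 hc)
  have h2 := norm_sub_le_norm_sub_add_norm_sub (ι q) z c
  linarith

lemma isClosed_setOf_norm_sub_le {Q E : Type*} [TopologicalSpace Q]
    [NormedAddCommGroup E] [NormedSpace ℝ E] {ι : Q → E}
    (hι : ∀ f : StrongDual ℝ E, Continuous fun q => f (ι q)) (c : E) (r : ℝ) :
    IsClosed {q | ‖ι q - c‖ ≤ r} := by
  have : {q | ‖ι q - c‖ ≤ r} = ⋂ f : {f : StrongDual ℝ E // ‖f‖ ≤ 1}, {q | f.1 (ι q) - f.1 c ≤ r} := by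
    ext q
    simp only [mem_ofPred_eq, mem_iInter]
    constructor
    · rintro h ⟨f, hf⟩
      rw [← map_sub]
      exact (le_abs_self _).trans ((f.le_of_opNorm_le hf _).trans (by simpa using h))
    · intro h
      obtain ⟨g, hg, hgq⟩ := exists_dual_vector'' ℝ (ι q - c)
      have := h ⟨g, hg⟩
      rw [← map_sub, hgq] at this
      simpa using this
  rw [this]
  exact isClosed_iInter fun f => isClosed_le ((hι f).sub continuous_const) continuous_const

/-- Weakly compact sets are fragmented by the norm. -/
lemma exists_isOpen_image_subset_closedBall {Q E : Type*} [TopologicalSpace Q] [CompactSpace Q]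
    [NormedAddCommGroup E] [NormedSpace ℝ E] {ι : Q → E} {R : ℝ} (hR : ∀ q, ‖ι q‖ ≤ R)
    (hι : ∀ f : StrongDual ℝ E, Continuous fun q => f (ι q)) {ε : ℝ} (hε : 0 < ε) {W : Set Q}
    (hW : IsOpen W) (hWne : W.Nonempty) :
    ∃ V ⊆ W, IsOpen V ∧ V.Nonempty ∧ ∃ c, ∀ q ∈ V, ‖ι q - c‖ ≤ ε := by
  by_contra! hcon
  obtain ⟨δ, hδ, hδε⟩ : ∃ δ > 0, 3 * δ = ε := ⟨ε / 3, by positivity, by ring⟩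
  let P := {p : Submodule ℝ E × Set Q //
    FiniteDimensional ℝ p.1 ∧ IsOpen p.2 ∧ p.2.Nonempty ∧ p.2 ⊆ W}
  have hstep : ∀ p : P, ∃ (q : P) (x : Q) (f : StrongDual ℝ E), x ∈ p.1.2 ∧ ι x ∈ q.1.1 ∧
      p.1.1 ≤ q.1.1 ∧ q.1.2 ⊆ p.1.2 ∧ ‖f‖ ≤ 1 ∧ (∀ z ∈ q.1.1, f z = 0) ∧
      ∀ z ∈ q.1.2, δ < f (ι z) := by
    rintro ⟨⟨F, U⟩, hF, hU, ⟨x, hx⟩, hUW⟩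
    dsimp only at hF hU hx hUW
    let F' : Submodule ℝ E := F ⊔ Submodule.span ℝ {ι x}
    have : ∃ y ∈ U, δ < Metric.infDist (ι y) F' := by
      by_contra! h
      obtain ⟨V, hVU, hV, hVne, c, hc⟩ := exists_isOpen_image_subset_closedBall_of_infDist_le hR
        (isClosed_setOf_norm_sub_le hι) F' hδ hU ⟨x, hx⟩ h
      obtain ⟨q, hq, hq'⟩ := hcon V (hVU.trans hUW) hV hVne c
      linarith [hc q hq]
    obtain ⟨y, hy, hyd⟩ := this
    obtain ⟨f, hf1, hf0, hfy⟩ := exists_dual_infDist F' (ι y)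
    refine ⟨⟨(F', U ∩ {q | δ < f (ι q)}), inferInstance,
      hU.inter (isOpen_lt continuous_const (hι f)), ⟨y, hy, by simpa [hfy] using hyd⟩,
      inter_subset_left.trans hUW⟩, x, f, hx,
      Submodule.mem_sup_right (Submodule.mem_span_singleton_self _), le_sup_left,
      inter_subset_left, hf1, hf0, fun z hz => hz.2⟩
  choose next pt fn hpt hptF hmono hanti hfn1 hfn0 hfn using hstep
  let p : ℕ → P := fun n => next^[n] ⟨(⊥, W), inferInstance, hW, hWne, subset_rfl⟩
  have hp : ∀ n, p (n + 1) = next (p n) := fun n => Function.iterate_succ_apply' _ _ _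
  have hF : Monotone fun n => (p n).1.1 := monotone_nat_of_le_succ fun n => by
    rw [hp]; exact hmono _
  have hU : Antitone fun n => (p n).1.2 := antitone_nat_of_succ_le fun n => by
    rw [hp]; exact hanti _
  obtain ⟨x, hx⟩ : ∃ x, MapClusterPt x Filter.atTop fun n => pt (p n) :=
    exists_clusterPt_of_compactSpace _
  have hxδ : ∀ n, δ ≤ fn (p n) (ι x) := by
    intro n
    have hcl : IsClosed {q | δ ≤ fn (p n) (ι q)} := isClosed_le continuous_const (hι _)
    refine hcl.mem_of_mapClusterPt hx ?_
    filter_upwards [Filter.eventually_ge_atTop (n + 1)] with k hk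
    refine (hfn (p n) _ ?_).le
    rw [← hp]
    exact hU hk (hpt _)
  have hxG : ι x ∈ (⨆ n, (p n).1.1).topologicalClosure := by
    by_contra hxn
    obtain ⟨f, u, hfu, hux⟩ := geometric_hahn_banach_closed_point
      (Submodule.convex _) (Submodule.isClosed_topologicalClosure _) hxn
    have hf0 : ∀ n, f (ι (pt (p n))) = 0 := by
      intro n
      have hmem : ι (pt (p n)) ∈ (⨆ n, (p n).1.1).topologicalClosure := by
        refine Submodule.le_topologicalClosure _ ?_
        refine Submodule.mem_iSup_of_mem (n + 1) ?_
        rw [hp]; exact hptF _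
      by_contra hne
      have := hfu (((u + 1) / f (ι (pt (p n)))) • ι (pt (p n))) (Submodule.smul_mem _ _ hmem)
      rw [map_smul, smul_eq_mul, div_mul_cancel₀ _ hne] at this
      linarith
    have hu0 := hfu 0 (Submodule.zero_mem _)
    have hfx : f (ι x) ≤ 0 := by
      have hcl : IsClosed {q | f (ι q) ≤ 0} := isClosed_le (hι _) continuous_const
      exact hcl.mem_of_mapClusterPt hx (.of_forall fun k => (hf0 k).le)
    simp at hu0
    linarith
  rw [← SetLike.mem_coe, Submodule.topologicalClosure_coe, Metric.mem_closure_iff] at hxG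
  obtain ⟨z, hz, hzx⟩ := hxG δ hδ
  rw [SetLike.mem_coe, Submodule.mem_iSup_of_directed _ hF.directed_le] at hz
  obtain ⟨N, hN⟩ := hz
  have h0 : fn (p N) z = 0 := hfn0 _ _ (by rw [← hp]; exact hF N.le_succ hN)
  have h1 := (le_abs_self _).trans ((fn (p N)).le_of_opNorm_le (hfn1 _) (ι x - z))
  rw [map_sub, h0, ← dist_eq_norm] at h1
  linarith [hxδ N]

lemma exists_forall_isOpen_image_subset_closedBall {Q E : Type*} [TopologicalSpace Q]
    [CompactSpace Q] [T2Space Q] [Nonempty Q]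
    [NormedAddCommGroup E] [NormedSpace ℝ E] {ι : Q → E} {R : ℝ} (hR : ∀ q, ‖ι q‖ ≤ R)
    (hι : ∀ f : StrongDual ℝ E, Continuous fun q => f (ι q)) :
    ∃ x : Q, ∀ ε > 0, ∃ V, IsOpen V ∧ x ∈ V ∧ ∀ q ∈ V, ‖ι q - ι x‖ ≤ ε := by
  let O : ℕ → Set Q := fun n => ⋃₀ {V | IsOpen V ∧ ∃ c, ∀ q ∈ V, ‖ι q - c‖ ≤ 1 / ((n : ℝ) + 1)}
  have hO : ∀ n, IsOpen (O n) := fun n => isOpen_sUnion fun V hV => hV.1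
  have hd : ∀ n, Dense (O n) := by
    intro n
    rw [dense_iff_inter_open]
    intro W hW hWne
    obtain ⟨V, hVW, hV, ⟨q, hq⟩, c, hc⟩ :=
      exists_isOpen_image_subset_closedBall hR hι (ε := 1 / ((n : ℝ) + 1)) (by positivity) hW hWne
    exact ⟨q, hVW hq, V, ⟨hV, c, hc⟩, hq⟩
  obtain ⟨x, hx⟩ := (dense_iInter_of_isOpen_nat hO hd).nonempty
  refine ⟨x, fun ε hε => ?_⟩
  obtain ⟨n, hn⟩ := exists_nat_one_div_lt (half_pos hε)
  obtain ⟨V, ⟨hV, c, hc⟩, hxV⟩ := mem_iInter.1 hx n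
  refine ⟨V, hV, hxV, fun q hq => ?_⟩
  have h1 := norm_sub_le_norm_sub_add_norm_sub (ι q) c (ι x)
  have h2 := hc q hq
  have h3 := hc x hxV
  rw [norm_sub_rev] at h3
  linarith

/-- An invariant positive normalised functional on `C(Q)`. -/
structure IsInvariantMean {S Q : Type*} [TopologicalSpace Q] (a : S → Q → Q)
    (m : C(Q, ℝ) →ₗ[ℝ] ℝ) : Prop where
  nonneg : ∀ f : C(Q, ℝ), (∀ x, 0 ≤ f x) → 0 ≤ m f
  one : m 1 = 1
  invariant : ∀ (s : S) (f g : C(Q, ℝ)), (∀ x, g x = f (a s x)) → m g = m f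

lemma IsInvariantMean.mono {S Q : Type*} [TopologicalSpace Q] {a : S → Q → Q}
    {m : C(Q, ℝ) →ₗ[ℝ] ℝ} (hm : IsInvariantMean a m) {f g : C(Q, ℝ)} (h : ∀ x, f x ≤ g x) :
    m f ≤ m g := by
  have := hm.nonneg (g - f) fun x => by simpa using h x
  rw [map_sub] at this
  linarith

/-- Functions along an orbit, as a map `C(Q, ℝ) → C(S)`. -/
def orbitPullback {S Q : Type*} [TopologicalSpace S] [TopologicalSpace Q] [CompactSpace Q]
    (o : C(S, Q)) (f : C(Q, ℝ)) : S →ᵇ ℂ :=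
  BoundedContinuousFunction.ofNormedAddCommGroup (fun t => ((f (o t) : ℝ) : ℂ))
    (by fun_prop) ‖f‖ fun t => by
      rw [Complex.norm_real]; exact f.norm_coe_le_norm _

lemma continuous_orbitPullback {S Q : Type*} [TopologicalSpace S] [TopologicalSpace Q]
    [CompactSpace Q] (o : C(S, Q)) : Continuous (orbitPullback o) := by
  refine (LipschitzWith.of_dist_le_mul (K := 1) fun f g => ?_).continuous
  rw [NNReal.coe_one, one_mul, BoundedContinuousFunction.dist_le dist_nonneg]
  intro t
  change dist ((f (o t) : ℝ) : ℂ) ((g (o t) : ℝ) : ℂ) ≤ _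
  rw [Complex.dist_of_im_eq (by simp), Complex.ofReal_re, Complex.ofReal_re]
  exact ContinuousMap.dist_apply_le_dist _

lemma exists_isInvariantMean {S : Type u} [Semigroup S] [TopologicalSpace S]
    (hLIM : HasLIM S (LUCset S)) {Q : Type*} [TopologicalSpace Q] [CompactSpace Q] [Nonempty Q]
    (a : S → Q → Q) (hact : ∀ s t x, a (s * t) x = a s (a t x))
    (ha : Continuous fun p : S × Q => a p.1 p.2) : ∃ m, IsInvariantMean a m := by
  obtain ⟨μ, hμ, hμ1, hinv⟩ := hLIM
  obtain ⟨x₀⟩ := ‹Nonempty Q›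
  let o : C(S, Q) := ⟨fun t => a t x₀, by fun_prop⟩
  have hone : orbitPullback o 1 = 1 := by ext t; simp [orbitPullback]
  have hadd : ∀ f g, orbitPullback o (f + g) = orbitPullback o f + orbitPullback o g := by
    intro f g; ext t; simp [orbitPullback]
  have hsmul : ∀ (c : ℝ) f, orbitPullback o (c • f) = (c : ℂ) • orbitPullback o f := by
    intro c f; ext t; simp [orbitPullback]
  let m : C(Q, ℝ) →ₗ[ℝ] ℝ :=
    { toFun := fun f => (μ (orbitPullback o f)).re
      map_add' := fun f g => by rw [hadd, map_add, Complex.add_re]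
      map_smul' := fun c f => by
        rw [hsmul, map_smul, smul_eq_mul, Complex.re_ofReal_mul]; rfl }
  have hmabs : ∀ f, m f ≤ ‖f‖ := by
    intro f
    refine (Complex.re_le_norm _).trans ((μ.le_of_opNorm_le hμ.le _).trans ?_)
    rw [one_mul]
    exact (BoundedContinuousFunction.norm_le (norm_nonneg f)).2 fun t => by
      change ‖((f (o t) : ℝ) : ℂ)‖ ≤ _
      rw [Complex.norm_real]; exact f.norm_coe_le_norm _
  have hm1 : m 1 = 1 := by
    change (μ (orbitPullback o 1)).re = 1
    rw [hone, hμ1, Complex.one_re]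
  refine ⟨m, ?_, hm1, ?_⟩
  · intro f hf
    have h1 : ‖(‖f‖ • (1 : C(Q, ℝ)) - f)‖ ≤ ‖f‖ := by
      refine (ContinuousMap.norm_le _ (norm_nonneg f)).2 fun x => ?_
      have h2 := (le_abs_self _).trans (f.norm_coe_le_norm x)
      have h3 := hf x
      simp only [ContinuousMap.sub_apply, ContinuousMap.smul_apply, ContinuousMap.one_apply,
        smul_eq_mul, mul_one, Real.norm_eq_abs]
      rw [abs_le]
      constructor <;> linarith
    have h2 := (hmabs _).trans h1
    rw [map_sub, map_smul, hm1, smul_eq_mul, mul_one] at h2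
    linarith
  · intro s f g hg
    let F : C(S × Q, ℝ) := ⟨fun p => f (a p.1 p.2), by fun_prop⟩
    have htr : IsLTranslates S (orbitPullback o f) fun s => orbitPullback o (F.curry s) := by
      intro s t
      change ((f (a s (a t x₀)) : ℝ) : ℂ) = ((f (a (s * t) x₀) : ℝ) : ℂ)
      rw [hact]
    have hluc : orbitPullback o f ∈ LUCset S :=
      ⟨_, htr, (continuous_orbitPullback o).comp F.curry.continuous⟩
    have hgF : g = F.curry s := by ext x; exact hg x
    have := hinv _ hluc _ htr s
    change (μ (orbitPullback o g)).re = (μ (orbitPullback o f)).re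
    rw [hgF, this]

/-- The support of a functional on `C(Q)`. -/
def meanSupport {Q : Type*} [TopologicalSpace Q] (m : C(Q, ℝ) →ₗ[ℝ] ℝ) : Set Q :=
  {x | ∀ f : C(Q, ℝ), (∀ y, 0 ≤ f y) → 0 < f x → 0 < m f}

lemma isClosed_meanSupport {Q : Type*} [TopologicalSpace Q] (m : C(Q, ℝ) →ₗ[ℝ] ℝ) :
    IsClosed (meanSupport m) := by
  have : meanSupport m = ⋂ f : {f : C(Q, ℝ) // (∀ y, 0 ≤ f y) ∧ ¬ 0 < m f}, {x | f.1 x ≤ 0} := by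
    ext x
    simp only [meanSupport, mem_ofPred_eq, mem_iInter]
    constructor
    · rintro h ⟨f, hf, hmf⟩
      exact not_lt.1 fun hx => hmf (h f hf hx)
    · intro h f hf hx
      by_contra hmf
      exact absurd (h ⟨f, hf, hmf⟩) (not_le.2 hx)
  rw [this]
  exact isClosed_iInter fun f => isClosed_le f.1.continuous continuous_const

namespace IsInvariantMean

variable {S Q : Type*} [TopologicalSpace Q] [CompactSpace Q] {a : S → Q → Q}
  {m : C(Q, ℝ) →ₗ[ℝ] ℝ}

lemma apply_nonpos_of_forall_meanSupport (hm : IsInvariantMean a m) {g : C(Q, ℝ)}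
    (hg : ∀ x ∈ meanSupport m, g x ≤ 0) : m g ≤ 0 := by
  refine le_of_forall_pos_le_add fun δ hδ => ?_
  rw [zero_add]
  have hc : IsCompact {x | δ ≤ g x} := (isClosed_le continuous_const g.continuous).isCompact
  let Z := {f : C(Q, ℝ) // (∀ y, 0 ≤ f y) ∧ m f = 0}
  obtain ⟨T, hT⟩ := hc.elim_finite_subcover (fun f : Z => {x | 0 < f.1 x})
    (fun f => isOpen_lt continuous_const f.1.continuous) (by
      intro x hx
      have hxs : x ∉ meanSupport m := fun h => absurd (hg x h) (by
        have : δ ≤ g x := hx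
        linarith)
      simp only [meanSupport, mem_ofPred_eq, not_forall] at hxs
      obtain ⟨f, hf, hfx, hmf⟩ := hxs
      exact mem_iUnion.2 ⟨⟨f, hf, le_antisymm (not_lt.1 hmf) (hm.nonneg f hf)⟩, hfx⟩)
  let F : C(Q, ℝ) := ∑ f ∈ T, f.1
  have hF0 : ∀ x, 0 ≤ F x := fun x => by
    simp only [F, ContinuousMap.sum_apply]
    exact Finset.sum_nonneg fun f _ => f.2.1 x
  have hmF : m F = 0 := by
    simp only [F, map_sum]
    exact Finset.sum_eq_zero fun f _ => f.2.2
  have hFpos : ∀ x ∈ {x | δ ≤ g x}, 0 < F x := by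
    intro x hx
    obtain ⟨f, hfT, hfx⟩ := by simpa using hT hx
    simp only [F, ContinuousMap.sum_apply]
    exact Finset.sum_pos' (fun f _ => f.2.1 x) ⟨_, hfT, hfx⟩
  obtain ⟨C, hC0, hC⟩ : ∃ C : ℝ, 0 ≤ C ∧ ∀ x ∈ {x | δ ≤ g x}, g x ≤ C * F x := by
    rcases eq_empty_or_nonempty {x | δ ≤ g x} with he | hne
    · exact ⟨0, le_rfl, by simp [he]⟩
    obtain ⟨y, hy, hymin⟩ := hc.exists_isMinOn hne F.continuous.continuousOn
    refine ⟨‖g‖ / F y, div_nonneg (norm_nonneg _) (hF0 y), fun x hx => ?_⟩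
    have h1 : F y ≤ F x := hymin hx
    have h2 := (le_abs_self _).trans (g.norm_coe_le_norm x)
    have h3 := hFpos y hy
    rw [div_mul_eq_mul_div, le_div_iff₀ h3]
    nlinarith [norm_nonneg g]
  have hle : m g ≤ m (δ • (1 : C(Q, ℝ)) + C • F) := hm.mono fun x => by
    simp only [ContinuousMap.add_apply, ContinuousMap.smul_apply, ContinuousMap.one_apply,
      smul_eq_mul, mul_one]
    by_cases hx : δ ≤ g x
    · linarith [hC x hx]
    · have := mul_nonneg hC0 (hF0 x)
      linarith
  rw [map_add, map_smul, map_smul, hmF, hm.one] at hle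
  simpa using hle

lemma nonempty_meanSupport (hm : IsInvariantMean a m) : (meanSupport m).Nonempty := by
  by_contra h
  have := hm.apply_nonpos_of_forall_meanSupport (g := 1) (by simp [not_nonempty_iff_eq_empty.1 h])
  linarith [hm.one]

lemma image_meanSupport [T2Space Q] (hm : IsInvariantMean a m) {s : S} (hs : Continuous (a s)) :
    a s '' meanSupport m = meanSupport m := by
  apply Subset.antisymm
  · rintro _ ⟨x, hx, rfl⟩ f hf hfx
    have := hx (f.comp ⟨a s, hs⟩) (fun y => hf _) hfx
    rwa [hm.invariant s f _ fun _ => rfl] at this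
  · intro x hx
    by_contra hxn
    have hcl : IsClosed (a s '' meanSupport m) :=
      ((isClosed_meanSupport m).isCompact.image hs).isClosed
    obtain ⟨f, hf0, hf1, hf⟩ := exists_continuous_zero_one_of_isClosed hcl
      (isClosed_singleton (x := x)) (by simpa using hxn)
    have h1 : 0 < m f := hx f (fun y => (hf y).1) (by rw [hf1 rfl]; exact one_pos)
    have h2 := hm.apply_nonpos_of_forall_meanSupport (g := f.comp ⟨a s, hs⟩)
      (fun y hy => (hf0 (mem_image_of_mem _ hy)).le)
    rw [hm.invariant s f _ fun _ => rfl] at h2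
    linarith

/-- Pairwise disjoint closed sets of mass at least `c` number at most `1 / c`. -/
lemma card_mul_le_one [T2Space Q] (hm : IsInvariantMean a m) {κ : Type*} [Fintype κ]
    (B : κ → Set Q) (hB : ∀ i, IsClosed (B i)) (hd : Pairwise fun i j => Disjoint (B i) (B j))
    {c : ℝ} (hc : ∀ i, ∀ f : C(Q, ℝ), (∀ x, 0 ≤ f x) → (∀ x ∈ B i, 1 ≤ f x) → c ≤ m f) :
    Fintype.card κ * c ≤ 1 := by
  classical
  rcases isEmpty_or_nonempty κ with hκ | ⟨⟨i₀⟩⟩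
  · simp
  let U : κ → Set Q := fun i => (⋃ j ∈ (Finset.univ.erase i), B j)ᶜ
  have hU : ∀ i x, x ∈ U i ↔ ∀ j, j ≠ i → x ∉ B j := by
    intro i x; simp [U]
  obtain ⟨f, hf⟩ := PartitionOfUnity.exists_isSubordinate (isClosed_univ (X := Q)) U
    (fun i => (isClosed_biUnion_finset fun j _ => hB j).isOpen_compl) (by
      intro x _
      by_cases hx : ∃ i, x ∈ B i
      · obtain ⟨i, hi⟩ := hx
        exact mem_iUnion.2 ⟨i, (hU i x).2 fun j hj hxj => (hd hj).ne_of_mem hxj hi rfl⟩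
      · push Not at hx
        exact mem_iUnion.2 ⟨i₀, (hU _ _).2 fun j _ => hx j⟩)
  have hsum : ∀ x, ∑ i, f i x = 1 := fun x => by
    rw [← finsum_eq_sum_of_fintype]; exact f.sum_eq_one (mem_univ x)
  have hone : ∀ i, ∀ x ∈ B i, 1 ≤ f i x := by
    intro i x hx
    rw [← hsum x]
    refine (Finset.sum_eq_single i (fun j _ hji => ?_) (by simp)).le
    by_contra hne
    have : x ∈ U j := hf j (subset_tsupport _ hne)
    exact (hU j x).1 this i hji.symm hx
  have hle : ∑ _i : κ, c ≤ ∑ i, m (f i) :=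
    Finset.sum_le_sum fun i _ => hc i (f i) (f.nonneg i) (hone i)
  rw [← map_sum, show ∑ i, f i = (1 : C(Q, ℝ)) by ext x; simpa using hsum x, hm.one] at hle
  simpa using hle

/-- Under a nonexpansive action by weakly continuous maps on a weakly compact set carrying an
invariant mean, some orbit is totally bounded in norm. -/
lemma exists_totallyBounded_orbit [T2Space Q] (hm : IsInvariantMean a m)
    (ha : ∀ s, Continuous (a s)) {E : Type*}
    [NormedAddCommGroup E] [NormedSpace ℝ E] {ι : Q → E} {R : ℝ} (hR : ∀ q, ‖ι q‖ ≤ R)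
    (hι : ∀ f : StrongDual ℝ E, Continuous fun q => f (ι q))
    (hne : ∀ s x y, ‖ι (a s x) - ι (a s y)‖ ≤ ‖ι x - ι y‖) :
    ∃ x, TotallyBounded (range fun s => ι (a s x)) := by
  classical
  have : CompactSpace (meanSupport m) :=
    isCompact_iff_compactSpace.1 (isClosed_meanSupport m).isCompact
  have : Nonempty (meanSupport m) := hm.nonempty_meanSupport.to_subtype
  obtain ⟨⟨x, hx⟩, hxV⟩ := exists_forall_isOpen_image_subset_closedBall
    (ι := fun q : meanSupport m => ι q) (fun q => hR q)
    (fun f => (hι f).comp continuous_subtype_val)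
  have hmass : ∀ r > 0, ∃ c > 0, ∀ f : C(Q, ℝ), (∀ y, 0 ≤ f y) →
      (∀ y, ‖ι y - ι x‖ ≤ r → 1 ≤ f y) → c ≤ m f := by
    intro r hr
    obtain ⟨V, hV, hxmem, hVr⟩ := hxV r hr
    obtain ⟨W, hW, rfl⟩ := isOpen_induced_iff.1 hV
    obtain ⟨g, hg0, hg1, hg⟩ := exists_continuous_zero_one_of_isClosed hW.isClosed_compl
      (isClosed_singleton (x := x)) (by simpa using hxmem)
    refine ⟨m g, hx g (fun y => (hg y).1) (by rw [hg1 rfl]; exact one_pos), fun f hf hf1 => ?_⟩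
    have h := hm.apply_nonpos_of_forall_meanSupport (g := g - f) fun y hy => by
      rw [ContinuousMap.sub_apply, sub_nonpos]
      by_cases hyW : y ∈ W
      · exact (hg y).2.trans (hf1 y (hVr ⟨y, hy⟩ hyW))
      · rw [hg0 hyW]; exact hf y
    rw [map_sub] at h
    linarith
  refine ⟨x, Metric.totallyBounded_iff.2 fun ε hε => ?_⟩
  obtain ⟨c, hc, hmc⟩ := hmass (ε / 3) (by positivity)
  have hcard : ∀ T : Finset S, (∀ s ∈ T, ∀ t ∈ T, s ≠ t → ε ≤ ‖ι (a s x) - ι (a t x)‖) →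
      (T.card : ℝ) * c ≤ 1 := by
    intro T hT
    rw [← Fintype.card_coe]
    refine hm.card_mul_le_one (fun s : T => {y | ‖ι y - ι (a s x)‖ ≤ ε / 3})
      (fun s => isClosed_setOf_norm_sub_le hι _ _) ?_ ?_
    · rintro ⟨s, hs⟩ ⟨t, ht⟩ hst
      refine disjoint_left.2 fun y hys hyt => ?_
      have h1 := hT s hs t ht fun h => hst (Subtype.ext h)
      have h2 := norm_sub_le_norm_sub_add_norm_sub (ι (a s x)) (ι y) (ι (a t x))
      have h3 : ‖ι y - ι (a s x)‖ ≤ ε / 3 := hys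
      have h4 : ‖ι y - ι (a t x)‖ ≤ ε / 3 := hyt
      rw [norm_sub_rev] at h3
      linarith
    · rintro ⟨s, hs⟩ f hf hf1
      rw [← hm.invariant s f (f.comp ⟨a s, ha s⟩) fun _ => rfl]
      exact hmc _ (fun y => hf _) fun y hy => hf1 _ ((hne s y x).trans hy)
  by_contra! hcon
  have hex : ∀ n : ℕ, ∃ T : Finset S, T.card = n ∧
      ∀ s ∈ T, ∀ t ∈ T, s ≠ t → ε ≤ ‖ι (a s x) - ι (a t x)‖ := by
    intro n
    induction n with
    | zero => exact ⟨∅, by simp⟩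
    | succ n ih =>
      obtain ⟨T, hTn, hT⟩ := ih
      have := hcon ((fun s => ι (a s x)) '' T) (T.finite_toSet.image _)
      obtain ⟨_, ⟨s, rfl⟩, hs⟩ := not_subset.1 this
      simp only [mem_iUnion, Metric.mem_ball, dist_eq_norm, exists_prop, mem_image,
        not_exists, not_and, not_lt] at hs
      have hs' : ∀ t ∈ T, ε ≤ ‖ι (a s x) - ι (a t x)‖ := fun t ht => hs _ ⟨t, ht, rfl⟩
      have hsT : s ∉ T := fun h => by
        have := hs' s h
        simp at this
        linarith
      refine ⟨insert s T, by rw [Finset.card_insert_of_notMem hsT, hTn], ?_⟩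
      intro p hp q hq hpq
      rcases Finset.mem_insert.1 hp with rfl | hp' <;> rcases Finset.mem_insert.1 hq with rfl | hq'
      · exact absurd rfl hpq
      · exact hs' q hq'
      · rw [norm_sub_rev]; exact hs' p hp'
      · exact hT p hp' q hq' hpq
  obtain ⟨n, hn⟩ := exists_nat_gt (1 / c)
  obtain ⟨T, hTn, hT⟩ := hex n
  have := hcard T hT
  rw [hTn] at this
  rw [div_lt_iff₀ hc] at hn
  linarith

end IsInvariantMean

/-- A compact invariant set of a jointly continuous action contains a compact set that every
element of the semigroup maps onto itself. -/
lemma exists_isCompact_image_eq {S : Type u} [Semigroup S] [TopologicalSpace S]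
    (hLIM : HasLIM S (LUCset S)) {V : Type*} [TopologicalSpace V] [T2Space V] {B : Set V}
    {π : S → V → V} (hB : IsCompact B) (hBne : B.Nonempty) (hinv : ∀ s, MapsTo (π s) B B)
    (hact : ∀ s t, ∀ x ∈ B, π (s * t) x = π s (π t x))
    (hπ : ContinuousOn (fun q : S × V => π q.1 q.2) (univ ×ˢ B)) :
    ∃ A ⊆ B, IsCompact A ∧ A.Nonempty ∧ ∀ s, π s '' A = A := by
  have : CompactSpace B := isCompact_iff_compactSpace.1 hB
  have : Nonempty B := hBne.to_subtype
  let a : S → B → B := fun s => (hinv s).restrict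
  have ha : Continuous fun p : S × B => a p.1 p.2 := by
    refine Continuous.subtype_mk (f := fun p : S × B => π p.1 p.2) ?_ _
    exact hπ.comp_continuous (f := fun p : S × B => (p.1, (p.2 : V))) (by fun_prop)
      fun p => ⟨mem_univ _, p.2.2⟩
  obtain ⟨m, hm⟩ := exists_isInvariantMean hLIM a
    (fun s t x => Subtype.ext (hact s t x x.2)) ha
  refine ⟨Subtype.val '' meanSupport m, Subtype.coe_image_subset _ _,
    (isClosed_meanSupport m).isCompact.image continuous_subtype_val,
    hm.nonempty_meanSupport.image _, fun s => ?_⟩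
  have h := hm.image_meanSupport (s := s) (by fun_prop)
  conv_rhs => rw [← h]
  rw [image_image, image_image]
  rfl

lemma exists_minimal_invariant {S V : Type*} [TopologicalSpace V] [T2Space V] [AddCommGroup V]
    [Module ℝ V] {K : Set V} {π : S → V → V} (hK : IsCompact K) (hKne : K.Nonempty)
    (hKcv : Convex ℝ K) (hinv : ∀ s, MapsTo (π s) K K) :
    ∃ C ⊆ K, IsCompact C ∧ C.Nonempty ∧ Convex ℝ C ∧ (∀ s, MapsTo (π s) C C) ∧
      ∀ D ⊆ C, IsCompact D → D.Nonempty → Convex ℝ D → (∀ s, MapsTo (π s) D D) → C ⊆ D := by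
  let 𝒞 : Set (Set V) :=
    {C | IsCompact C ∧ C.Nonempty ∧ Convex ℝ C ∧ ∀ s, MapsTo (π s) C C}
  obtain ⟨C, hCK, ⟨h1, h2, h3, h4⟩, hmin⟩ := zorn_superset_nonempty 𝒞 (by
    intro c hc hchain hcne
    have : Nonempty c := hcne.to_subtype
    refine ⟨⋂₀ c, ⟨?_, ?_, ?_, ?_⟩, fun s hs => sInter_subset_of_mem hs⟩
    · obtain ⟨s, hs⟩ := hcne
      exact (hc hs).1.of_isClosed_subset (isClosed_sInter fun t ht => (hc ht).1.isClosed)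
        (sInter_subset_of_mem hs)
    · exact IsCompact.nonempty_sInter_of_directed_nonempty_isCompact_isClosed
        (fun U hU W hW => (hchain.total hU hW).elim (fun h => ⟨U, hU, subset_rfl, h⟩)
          fun h => ⟨W, hW, h, subset_rfl⟩) (fun U hU => (hc hU).2.1) (fun U hU => (hc hU).1)
        (fun U hU => (hc hU).1.isClosed)
    · exact convex_sInter fun t ht => (hc ht).2.2.1
    · intro s x hx t ht
      exact (hc ht).2.2.2 s (hx t ht)) K ⟨hK, hKne, hKcv, hinv⟩
  exact ⟨C, hCK, h1, h2, h3, h4, fun D hDC hD hDne hDcv hDinv =>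
    hmin ⟨hD, hDne, hDcv, hDinv⟩ hDC⟩

/-- Totally bounded sets have normal structure. -/
lemma TotallyBounded.exists_mem_convexHull_norm_sub_le {E : Type*} [NormedAddCommGroup E]
    [NormedSpace ℝ E] {T : Set E} (hT : TotallyBounded T) (hTne : T.Nonempty) {d : ℝ} (hd : 0 < d)
    (hTd : ∀ a ∈ T, ∀ b ∈ T, ‖a - b‖ ≤ d) :
    ∃ u ∈ convexHull ℝ T, ∃ r < d, ∀ a ∈ T, ‖u - a‖ ≤ r := by
  classical
  obtain ⟨t, htT, htfin, ht⟩ := Metric.finite_approx_of_totallyBounded hT (d / 2) (half_pos hd)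
  lift t to Finset E using htfin
  have htne : t.Nonempty := by
    obtain ⟨a, ha⟩ := hTne
    obtain ⟨y, hy, -⟩ := by simpa using ht ha
    exact ⟨y, hy⟩
  have hn : (0 : ℝ) < t.card := by exact_mod_cast htne.card_pos
  refine ⟨∑ y ∈ t, (t.card : ℝ)⁻¹ • y, ?_, d - d / 2 / t.card,
    sub_lt_self _ (by positivity), fun a ha => ?_⟩
  · refine (convex_convexHull ℝ T).sum_mem (fun _ _ => by positivity) ?_
      fun y hy => subset_convexHull ℝ T (htT hy)
    rw [Finset.sum_const, nsmul_eq_mul, mul_inv_cancel₀ hn.ne']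
  · obtain ⟨z, hz, haz⟩ := by simpa using ht ha
    have hsub : ∑ y ∈ t, (t.card : ℝ)⁻¹ • y - a = ∑ y ∈ t, (t.card : ℝ)⁻¹ • (y - a) := by
      simp_rw [smul_sub, Finset.sum_sub_distrib, Finset.sum_const]
      rw [← Nat.cast_smul_eq_nsmul ℝ, smul_smul, mul_inv_cancel₀ hn.ne', one_smul]
    have hsum : ∑ y ∈ t, ‖y - a‖ ≤ t.card * d - d / 2 := by
      rw [← Finset.add_sum_erase t _ hz]
      have h1 : ∑ y ∈ t.erase z, ‖y - a‖ ≤ ∑ _y ∈ t.erase z, d :=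
        Finset.sum_le_sum fun y hy => hTd y (htT (Finset.mem_of_mem_erase hy)) a ha
      rw [Finset.sum_const, nsmul_eq_mul, Finset.cast_card_erase_of_mem hz] at h1
      have h2 : ‖z - a‖ ≤ d / 2 := by rw [norm_sub_rev, ← dist_eq_norm]; exact haz.le
      linarith
    rw [hsub]
    refine (norm_sum_le _ _).trans ?_
    simp_rw [norm_smul, norm_inv, Real.norm_natCast]
    rw [← Finset.mul_sum, inv_mul_le_iff₀ hn]
    refine hsum.trans (le_of_eq ?_)
    field_simp

open WeakDual in
lemma IsCompact.exists_norm_toStrongDual_le {X : Type v} [NormedAddCommGroup X] [NormedSpace ℝ X]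
    [CompleteSpace X] {K : Set (WeakDual ℝ X)} (hK : IsCompact K) :
    ∃ R, ∀ x ∈ K, ‖toStrongDual x‖ ≤ R := by
  obtain ⟨C, hC⟩ := banach_steinhaus (g := fun i : K => toStrongDual i.1) fun x => by
    obtain ⟨M, hM⟩ := hK.exists_bound_of_continuousOn (WeakDual.eval_continuous x).continuousOn
    exact ⟨M, fun i => hM i i.2⟩
  exact ⟨C, fun x hx => hC ⟨x, hx⟩⟩

lemma isClosed_setOf_forall_norm_toStrongDual_sub_le {X : Type v} [NormedAddCommGroup X]
    [NormedSpace ℝ X] (A : Set (WeakDual ℝ X)) (r : ℝ) :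
    IsClosed {y : WeakDual ℝ X |
      ∀ a ∈ A, ‖WeakDual.toStrongDual y - WeakDual.toStrongDual a‖ ≤ r} := by
  have : {y : WeakDual ℝ X | ∀ a ∈ A, ‖WeakDual.toStrongDual y - WeakDual.toStrongDual a‖ ≤ r} =
      ⋂ a ∈ A, WeakDual.toStrongDual ⁻¹' Metric.closedBall (WeakDual.toStrongDual a) r := by
    ext y
    simp [dist_eq_norm]
  rw [this]
  exact isClosed_biInter fun a _ => WeakDual.isClosed_closedBall _ r

lemma convex_setOf_forall_norm_toStrongDual_sub_le {X : Type v} [NormedAddCommGroup X]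
    [NormedSpace ℝ X] (A : Set (WeakDual ℝ X)) (r : ℝ) :
    Convex ℝ {y : WeakDual ℝ X |
      ∀ a ∈ A, ‖WeakDual.toStrongDual y - WeakDual.toStrongDual a‖ ≤ r} := by
  intro x hx y hy p q hp hq hpq a ha
  have := (convex_closedBall (WeakDual.toStrongDual a) r)
    (x := WeakDual.toStrongDual x) (by simpa [dist_eq_norm] using hx a ha)
    (y := WeakDual.toStrongDual y) (by simpa [dist_eq_norm] using hy a ha) hp hq hpq
  simpa [dist_eq_norm] using this

open Filter Topology in
/-- The limit along an ultrafilter of a bounded family in a normed space, as an element of the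
bidual. -/
lemma exists_bidual_tendsto_ultrafilter {Q E : Type*} [NormedAddCommGroup E] [NormedSpace ℝ E]
    (𝒰 : Ultrafilter Q) (ι : Q → E) {R : ℝ} (hR : ∀ᶠ q in 𝒰, ‖ι q‖ ≤ R) :
    ∃ F : StrongDual ℝ (StrongDual ℝ E), ∀ f : StrongDual ℝ E,
      Tendsto (fun q => f (ι q)) 𝒰 (𝓝 (F f)) := by
  have hlim : ∀ f : StrongDual ℝ E, ∃ l : ℝ, ‖l‖ ≤ R * ‖f‖ ∧
      Tendsto (fun q => f (ι q)) 𝒰 (𝓝 l) := by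
    intro f
    obtain ⟨l, hl, hle⟩ := (isCompact_closedBall (0 : ℝ) (R * ‖f‖)).ultrafilter_le_nhds
      (𝒰.map fun q => f (ι q)) (by
        rw [le_principal_iff]
        change ∀ᶠ q in 𝒰, f (ι q) ∈ Metric.closedBall (0 : ℝ) (R * ‖f‖)
        filter_upwards [hR] with q hq
        rw [mem_closedBall_zero_iff, mul_comm]
        exact f.le_opNorm_of_le hq)
    exact ⟨l, by simpa using hl, hle⟩
  choose L hLR hL using hlim
  let F : StrongDual ℝ E →ₗ[ℝ] ℝ :=
    { toFun := L
      map_add' := fun f g => tendsto_nhds_unique (hL (f + g)) ((hL f).add (hL g))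
      map_smul' := fun c f => tendsto_nhds_unique (hL (c • f)) ((hL f).const_mul c) }
  exact ⟨F.mkContinuous R hLR, hL⟩

open Filter Topology WeakDual in
set_option maxSynthPendingDepth 3 in
/-- On a set of Chebyshev centres in the dual of an `M`-embedded space, the weak* topology
is finer than the weak topology. -/
lemma MEmbeddedSpace.continuousOn_of_isChebyshev {X : Type v} [NormedAddCommGroup X]
    [NormedSpace ℝ X] (hM : MEmbeddedSpace X) {K A C : Set (WeakDual ℝ X)} {r : ℝ}
    (hAne : A.Nonempty) (hCK : C ⊆ K)
    (hC : ∀ y ∈ C, ∀ a ∈ A, ‖toStrongDual y - toStrongDual a‖ ≤ r)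
    (hr : ∀ y ∈ K, ∀ ρ, (∀ a ∈ A, ‖toStrongDual y - toStrongDual a‖ ≤ ρ) → r ≤ ρ)
    (f : StrongDual ℝ (StrongDual ℝ X)) : ContinuousOn (fun x => f (toStrongDual x)) C := by
  intro y hy
  rw [ContinuousWithinAt, tendsto_iff_ultrafilter]
  intro 𝒰 h𝒰
  rw [← tendsto_id', tendsto_nhdsWithin_iff] at h𝒰
  obtain ⟨h𝒰y, h𝒰C⟩ := h𝒰
  obtain ⟨a₀, ha₀⟩ := hAne
  obtain ⟨F, hF⟩ := exists_bidual_tendsto_ultrafilter 𝒰 (fun c => toStrongDual c)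
    (R := r + ‖toStrongDual a₀‖) (by
      filter_upwards [h𝒰C] with c hc
      have h1 := norm_sub_norm_le (toStrongDual c) (toStrongDual a₀)
      have h2 := hC c hc a₀ ha₀
      linarith)
  let J := NormedSpace.inclusionInDoubleDual ℝ (StrongDual ℝ X)
  have hH : ∀ x : X, (F - J (toStrongDual y)) (NormedSpace.inclusionInDoubleDual ℝ X x) = 0 := by
    intro x
    have h1 := hF (NormedSpace.inclusionInDoubleDual ℝ X x)
    have h2 := ((WeakDual.eval_continuous x).tendsto y).comp h𝒰y
    have h3 := tendsto_nhds_unique h1 h2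
    rw [_root_.sub_apply, h3]
    exact sub_self _
  have hr0 : 0 ≤ r := (norm_nonneg _).trans (hC y hy a₀ ha₀)
  have hbound : ∀ a ∈ A,
      ‖toStrongDual y - toStrongDual a‖ ≤ r - ‖F - J (toStrongDual y)‖ := by
    intro a ha
    have h1 := hM.2 (toStrongDual y - toStrongDual a) _ hH
    have h2 : J (toStrongDual y - toStrongDual a) + (F - J (toStrongDual y)) =
        F - J (toStrongDual a) := by rw [map_sub]; abel
    have h3 : ‖J (toStrongDual y - toStrongDual a)‖ = ‖toStrongDual y - toStrongDual a‖ :=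
      (NormedSpace.inclusionInDoubleDualLi ℝ (E := StrongDual ℝ X)).norm_map _
    have h4 : ‖F - J (toStrongDual a)‖ ≤ r := by
      refine ContinuousLinearMap.opNorm_le_bound _ hr0 fun φ => ?_
      have h5 : Tendsto (fun c : WeakDual ℝ X => φ (toStrongDual c) - φ (toStrongDual a)) 𝒰
        (𝓝 (F φ - φ (toStrongDual a))) := (hF φ).sub_const _
      refine le_of_tendsto h5.norm ?_
      filter_upwards [h𝒰C] with c hc
      rw [← map_sub, mul_comm]
      exact φ.le_opNorm_of_le (hC c hc a ha)
    rw [h2, h3] at h1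
    linarith
  have h0 : ‖F - J (toStrongDual y)‖ = 0 :=
    le_antisymm (by linarith [hr y (hCK hy) _ hbound]) (norm_nonneg _)
  have hFJ : F = J (toStrongDual y) := sub_eq_zero.1 (norm_eq_zero.1 h0)
  have := hF f
  rw [hFJ] at this
  exact this

open WeakDual in
lemma exists_isChebyshev {X : Type v} [NormedAddCommGroup X]
    [NormedSpace ℝ X] {K A : Set (WeakDual ℝ X)} (hK : IsCompact K)
    (hA : A.Nonempty) {R : ℝ} (hR : ∃ y ∈ K, ∀ a ∈ A, ‖toStrongDual y - toStrongDual a‖ ≤ R) :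
    ∃ r, (∃ y ∈ K, ∀ a ∈ A, ‖toStrongDual y - toStrongDual a‖ ≤ r) ∧
      ∀ y ∈ K, ∀ ρ, (∀ a ∈ A, ‖toStrongDual y - toStrongDual a‖ ≤ ρ) → r ≤ ρ := by
  let D : Set ℝ := {ρ | ∃ y ∈ K, ∀ a ∈ A, ‖toStrongDual y - toStrongDual a‖ ≤ ρ}
  have hDne : D.Nonempty := ⟨R, hR⟩
  have hDb : BddBelow D := by
    obtain ⟨a, ha⟩ := hA
    exact ⟨0, fun ρ ⟨y, _, hy⟩ => (norm_nonneg _).trans (hy a ha)⟩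
  refine ⟨sInf D, ?_, fun y hy ρ hρ => csInf_le hDb ⟨y, hy, hρ⟩⟩
  let B : ℕ → Set (WeakDual ℝ X) := fun n =>
    K ∩ {y | ∀ a ∈ A, ‖toStrongDual y - toStrongDual a‖ ≤ sInf D + 1 / ((n : ℝ) + 1)}
  have hBcl : ∀ n, IsClosed (B n) := fun n =>
    hK.isClosed.inter (isClosed_setOf_forall_norm_toStrongDual_sub_le A _)
  obtain ⟨y, hy⟩ := IsCompact.nonempty_iInter_of_sequence_nonempty_isCompact_isClosed B
    (by
      rintro n y ⟨hy, hya⟩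
      refine ⟨hy, fun a ha => (hya a ha).trans ?_⟩
      gcongr
      simp)
    (by
      intro n
      obtain ⟨ρ, ⟨y, hy, hya⟩, hρ⟩ := exists_lt_of_csInf_lt hDne
        (show sInf D < sInf D + 1 / ((n : ℝ) + 1) from lt_add_of_pos_right _ (by positivity))
      exact ⟨y, hy, fun a ha => (hya a ha).trans hρ.le⟩)
    (hK.of_isClosed_subset (hBcl 0) inter_subset_left) hBcl
  rw [mem_iInter] at hy
  refine ⟨y, (hy 0).1, fun a ha => le_of_forall_pos_le_add fun ε hε => ?_⟩
  obtain ⟨n, hn⟩ := exists_nat_one_div_lt hε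
  linarith [(hy n).2 a ha]

open WeakDual in
/-- Fixed points for nonexpansive actions on weak* compact convex sets whose weak and weak*
topologies agree. -/
lemma exists_fixedPoint_of_continuousOn_bidual {S : Type u} [Semigroup S] [TopologicalSpace S]
    (hLIM : HasLIM S (LUCset S)) {X : Type v} [NormedAddCommGroup X] [NormedSpace ℝ X]
    [CompleteSpace X] {K : Set (WeakDual ℝ X)} {π : S → WeakDual ℝ X → WeakDual ℝ X}
    (hKne : K.Nonempty) (hKcv : Convex ℝ K) (hK : IsCompact K)
    (hinv : ∀ s, MapsTo (π s) K K)
    (hact : ∀ s t, ∀ x ∈ K, π (s * t) x = π s (π t x))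
    (hne : ∀ s, ∀ x ∈ K, ∀ y ∈ K,
      ‖toStrongDual (π s x) - toStrongDual (π s y)‖ ≤ ‖toStrongDual x - toStrongDual y‖)
    (hπ : ContinuousOn (fun q : S × WeakDual ℝ X => π q.1 q.2) (univ ×ˢ K))
    (hw : ∀ f : StrongDual ℝ (StrongDual ℝ X), ContinuousOn (fun x => f (toStrongDual x)) K) :
    ∃ x ∈ K, ∀ s, π s x = x := by
  obtain ⟨C, hCK, hC, hCne, hCcv, hCinv, hmin⟩ := exists_minimal_invariant hK hKne hKcv hinv
  have : CompactSpace C := isCompact_iff_compactSpace.1 hC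
  have : Nonempty C := hCne.to_subtype
  obtain ⟨R, hR⟩ := hC.exists_norm_toStrongDual_le
  let a : S → C → C := fun s => (hCinv s).restrict
  have ha : Continuous fun p : S × C => a p.1 p.2 := by
    refine Continuous.subtype_mk (f := fun p : S × C => π p.1 p.2) ?_ _
    exact hπ.comp_continuous (f := fun p : S × C => (p.1, (p.2 : WeakDual ℝ X))) (by fun_prop)
      fun p => ⟨mem_univ _, hCK p.2.2⟩
  obtain ⟨m, hm⟩ := exists_isInvariantMean hLIM a
    (fun s t x => Subtype.ext (hact s t x (hCK x.2))) ha
  obtain ⟨⟨x, hx⟩, hxT⟩ := hm.exists_totallyBounded_orbit (fun s => by fun_prop)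
    (ι := fun c : C => toStrongDual c.1) (fun q => hR q q.2)
    (fun f => (hw f).comp_continuous continuous_subtype_val fun c => hCK c.2)
    (fun s y z => hne s y (hCK y.2) z (hCK z.2))
  -- the weak* closure of a totally bounded orbit
  let B : Set (WeakDual ℝ X) := closure (range fun s => π s x)
  have horb : (range fun s => π s x) ⊆ C := range_subset_iff.2 fun s => hCinv s hx
  have hBC : B ⊆ C := closure_minimal horb hC.isClosed
  have hB : IsCompact B := hC.of_isClosed_subset isClosed_closure hBC
  have hS : Nonempty S := by
    by_contra hS
    have := not_nonempty_iff.1 hS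
    obtain ⟨μ, hμ, hμ1, -⟩ := hLIM
    have h1 : (1 : S →ᵇ ℂ) = 0 := by ext s; exact this.elim s
    rw [h1, map_zero] at hμ1
    exact zero_ne_one hμ1
  have hcontπ : ∀ s, ContinuousOn (π s) C := fun s =>
    hπ.comp (f := fun y => (s, y)) (by fun_prop) fun y hy => ⟨mem_univ _, hCK hy⟩
  have hBinv : ∀ s, MapsTo (π s) B B := by
    intro s
    refine MapsTo.closure_of_continuousOn ?_ ((hcontπ s).mono hBC)
    rintro _ ⟨t, rfl⟩
    exact ⟨s * t, hact s t x (hCK hx)⟩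
  obtain ⟨A, hAB, hA, hAne, hAs⟩ := exists_isCompact_image_eq hLIM hB
    ((range_nonempty _).mono subset_closure) hBinv
    (fun s t y hy => hact s t y (hCK (hBC hy)))
    (hπ.mono (prod_mono_right (hBC.trans hCK)))
  have hBT : TotallyBounded (toStrongDual '' B) := by
    refine Metric.totallyBounded_iff.2 fun ε hε => ?_
    obtain ⟨t, htfin, ht⟩ := Metric.totallyBounded_iff.1 hxT (ε / 2) (half_pos hε)
    refine ⟨t, htfin, ?_⟩
    have hcl : IsClosed (⋃ z ∈ t, (toStrongDual ⁻¹' Metric.closedBall z (ε / 2) :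
        Set (WeakDual ℝ X))) := htfin.isClosed_biUnion fun z _ => isClosed_closedBall z _
    have hBt : B ⊆ ⋃ z ∈ t, (toStrongDual ⁻¹' Metric.closedBall z (ε / 2) :
        Set (WeakDual ℝ X)) := by
      refine closure_minimal ?_ hcl
      rintro _ ⟨s, rfl⟩
      obtain ⟨z, hz, hsz⟩ := mem_iUnion₂.1 (ht (mem_range_self s))
      exact mem_iUnion₂.2 ⟨z, hz, Metric.ball_subset_closedBall (α := StrongDual ℝ X) hsz⟩
    rintro _ ⟨y, hy, rfl⟩
    obtain ⟨z, hz, hyz⟩ := mem_iUnion₂.1 (hBt hy)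
    exact mem_iUnion₂.2 ⟨z, hz, Metric.closedBall_subset_ball (half_lt_self hε) hyz⟩
  have hAT : TotallyBounded (toStrongDual '' A) := hBT.subset (image_mono hAB)
  have hAC := hAB.trans hBC
  have hAsub : A.Subsingleton := by
    by_contra hnon
    rw [not_subsingleton_iff] at hnon
    obtain ⟨p, hp, q, hq, hpq⟩ := hnon
    let d := Metric.diam (toStrongDual '' A)
    have hdist : ∀ b ∈ A, ∀ c ∈ A, ‖toStrongDual b - toStrongDual c‖ ≤ d := fun b hb c hc => by
      rw [← dist_eq_norm]
      exact Metric.dist_le_diam_of_mem hAT.isBounded (mem_image_of_mem _ hb) (mem_image_of_mem _ hc)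
    have hd : 0 < d := by
      refine lt_of_lt_of_le (norm_pos_iff.2 ?_) (hdist p hp q hq)
      exact fun h => hpq (toStrongDual.injective (sub_eq_zero.1 h))
    obtain ⟨u, hu, r, hrd, hur⟩ := hAT.exists_mem_convexHull_norm_sub_le (hAne.image _) hd (by
      rintro _ ⟨b, hb, rfl⟩ _ ⟨c, hc, rfl⟩
      exact hdist b hb c hc)
    have huC : StrongDual.toWeakDual u ∈ C := by
      have h1 : convexHull ℝ (toStrongDual '' A) = toStrongDual '' convexHull ℝ A :=
        (toStrongDual (𝕜 := ℝ) (E := X)).toLinearMap.image_convexHull A |>.symm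
      rw [h1] at hu
      obtain ⟨w, hwA, rfl⟩ := hu
      exact convexHull_min hAC hCcv hwA
    let D := C ∩ {y : WeakDual ℝ X | ∀ a ∈ A, ‖toStrongDual y - toStrongDual a‖ ≤ r}
    have hCD : C ⊆ D := by
      refine hmin D inter_subset_left
        (hC.inter_right (isClosed_setOf_forall_norm_toStrongDual_sub_le A r))
        ⟨_, huC, fun b hb => hur _ (mem_image_of_mem _ hb)⟩
        (hCcv.inter (convex_setOf_forall_norm_toStrongDual_sub_le A r)) ?_
      rintro s y ⟨hyC, hy⟩
      refine ⟨hCinv s hyC, fun b hb => ?_⟩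
      rw [← hAs s] at hb
      obtain ⟨c, hc, rfl⟩ := hb
      exact (hne s y (hCK hyC) c (hCK (hAC hc))).trans (hy c hc)
    have hdr : d ≤ r := by
      refine Metric.diam_le_of_forall_dist_le ((norm_nonneg _).trans ((hCD huC).2 p hp)) ?_
      rintro _ ⟨b, hb, rfl⟩ _ ⟨c, hc, rfl⟩
      rw [dist_eq_norm]
      exact (hCD (hAC hb)).2 c hc
    linarith
  obtain ⟨p, hp⟩ := hAne
  refine ⟨p, hCK (hAC hp), fun s => hAsub ?_ hp⟩
  rw [← hAs s]
  exact mem_image_of_mem _ hp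

open WeakDual in
lemma MEmbeddedSpace.exists_fixedPoint {S : Type u} [Semigroup S] [TopologicalSpace S]
    (hLIM : HasLIM S (LUCset S)) {X : Type v} [NormedAddCommGroup X] [NormedSpace ℝ X]
    [CompleteSpace X] (hM : MEmbeddedSpace X) {K : Set (WeakDual ℝ X)}
    {π : S → WeakDual ℝ X → WeakDual ℝ X}
    (hKne : K.Nonempty) (hKcv : Convex ℝ K) (hK : IsCompact K)
    (hinv : ∀ s, MapsTo (π s) K K)
    (hact : ∀ s t, ∀ x ∈ K, π (s * t) x = π s (π t x))
    (hne : ∀ s, ∀ x ∈ K, ∀ y ∈ K,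
      ‖toStrongDual (π s x) - toStrongDual (π s y)‖ ≤ ‖toStrongDual x - toStrongDual y‖)
    (hπ : ContinuousOn (fun q : S × WeakDual ℝ X => π q.1 q.2) (univ ×ˢ K)) :
    ∃ x ∈ K, ∀ s, π s x = x := by
  obtain ⟨A, hAK, -, hAne, hAs⟩ := exists_isCompact_image_eq hLIM hK hKne hinv hact hπ
  obtain ⟨R, hR⟩ := hK.exists_norm_toStrongDual_le
  obtain ⟨r, hrne, hr⟩ := exists_isChebyshev hK hAne (R := R + R) (by
    obtain ⟨y, hy⟩ := hKne
    exact ⟨y, hy, fun a ha => (norm_sub_le _ _).trans (add_le_add (hR y hy) (hR a (hAK ha)))⟩)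
  let C := K ∩ {y : WeakDual ℝ X | ∀ a ∈ A, ‖toStrongDual y - toStrongDual a‖ ≤ r}
  have hCK : C ⊆ K := inter_subset_left
  obtain ⟨x, hx, hfix⟩ := exists_fixedPoint_of_continuousOn_bidual hLIM (K := C) (π := π) hrne
    (hKcv.inter (convex_setOf_forall_norm_toStrongDual_sub_le A r))
    (hK.inter_right (isClosed_setOf_forall_norm_toStrongDual_sub_le A r))
    (by
      rintro s y ⟨hyK, hy⟩
      refine ⟨hinv s hyK, fun b hb => ?_⟩
      rw [← hAs s] at hb
      obtain ⟨c, hc, rfl⟩ := hb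
      exact (hne s y hyK c (hAK hc)).trans (hy c hc))
    (fun s t y hy => hact s t y (hCK hy))
    (fun s y hy z hz => hne s y (hCK hy) z (hCK hz))
    (hπ.mono (prod_mono_right hCK))
    (hM.continuousOn_of_isChebyshev hAne hCK (fun y hy => hy.2) hr)
  exact ⟨x, hCK hx, hfix⟩

open WeakDual in
/-- The nonexpansive self-maps of `K` that fix `F` pointwise. -/
def nonexpansiveFixing {X : Type v} [NormedAddCommGroup X] [NormedSpace ℝ X]
    (K F : Set (WeakDual ℝ X)) : Set (K → WeakDual ℝ X) :=
  {T | (∀ x, T x ∈ K) ∧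
    (∀ x y, ‖toStrongDual (T x) - toStrongDual (T y)‖ ≤
      ‖toStrongDual (x : WeakDual ℝ X) - toStrongDual (y : WeakDual ℝ X)‖) ∧
    ∀ x : K, x.1 ∈ F → T x = x}

lemma isClosed_setOf_norm_toStrongDual_apply_sub_le {X : Type v} [NormedAddCommGroup X]
    [NormedSpace ℝ X] {κ : Type*} (d : κ → κ → ℝ) :
    IsClosed {T : κ → WeakDual ℝ X |
      ∀ x y, ‖WeakDual.toStrongDual (T x) - WeakDual.toStrongDual (T y)‖ ≤ d x y} := by
  have : {T : κ → WeakDual ℝ X |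
      ∀ x y, ‖WeakDual.toStrongDual (T x) - WeakDual.toStrongDual (T y)‖ ≤ d x y} =
      ⋂ x, ⋂ y, (fun T : κ → WeakDual ℝ X => T x - T y) ⁻¹'
        (WeakDual.toStrongDual ⁻¹' Metric.closedBall 0 (d x y)) := by
    ext T
    simp
  rw [this]
  exact isClosed_iInter fun x => isClosed_iInter fun y =>
    (WeakDual.isClosed_closedBall _ _).preimage (by fun_prop)

lemma isCompact_nonexpansiveFixing {X : Type v} [NormedAddCommGroup X] [NormedSpace ℝ X]
    {K F : Set (WeakDual ℝ X)} (hK : IsCompact K) : IsCompact (nonexpansiveFixing K F) := by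
  refine (isCompact_univ_pi fun _ : K => hK).of_isClosed_subset ?_ fun T hT x _ => hT.1 x
  have : nonexpansiveFixing K F = (⋂ x, (fun T : K → WeakDual ℝ X => T x) ⁻¹' K) ∩
      ({T | ∀ x y : K, ‖WeakDual.toStrongDual (T x) - WeakDual.toStrongDual (T y)‖ ≤
        ‖WeakDual.toStrongDual x.1 - WeakDual.toStrongDual y.1‖} ∩
      ⋂ x : K, ⋂ _ : x.1 ∈ F, {T | T x = x}) := by
    ext T
    simp [nonexpansiveFixing]
  rw [this]
  refine (isClosed_iInter fun x => hK.isClosed.preimage (continuous_apply x)).inter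
    ((isClosed_setOf_norm_toStrongDual_apply_sub_le _).inter ?_)
  exact isClosed_iInter fun x => isClosed_iInter fun _ =>
    isClosed_eq (continuous_apply x) continuous_const

lemma convex_nonexpansiveFixing {X : Type v} [NormedAddCommGroup X] [NormedSpace ℝ X]
    {K F : Set (WeakDual ℝ X)} (hK : Convex ℝ K) : Convex ℝ (nonexpansiveFixing K F) := by
  rintro T ⟨hT1, hT2, hT3⟩ U ⟨hU1, hU2, hU3⟩ p q hp hq hpq
  refine ⟨fun x => hK (hT1 x) (hU1 x) hp hq hpq, fun x y => ?_, fun x hx => ?_⟩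
  · have h : WeakDual.toStrongDual ((p • T + q • U) x) - WeakDual.toStrongDual ((p • T + q • U) y) =
        p • (WeakDual.toStrongDual (T x) - WeakDual.toStrongDual (T y)) +
          q • (WeakDual.toStrongDual (U x) - WeakDual.toStrongDual (U y)) := by
      simp only [Pi.add_apply, Pi.smul_apply, map_add, map_smul]
      module
    rw [h]
    refine (norm_add_le _ _).trans ?_
    rw [norm_smul, norm_smul, Real.norm_of_nonneg hp, Real.norm_of_nonneg hq]
    have h1 := mul_le_mul_of_nonneg_left (hT2 x y) hp
    have h2 := mul_le_mul_of_nonneg_left (hU2 x y) hq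
    refine (add_le_add h1 h2).trans (le_of_eq ?_)
    rw [← add_mul, hpq, one_mul]
  · simp only [Pi.add_apply, Pi.smul_apply, hT3 x hx, hU3 x hx]
    rw [← add_smul, hpq, one_smul]

open WeakDual in
/-- Bruck's retraction principle: if every point of `K` is sent into `F` by a nonexpansive map
fixing `F`, then a single such map retracts `K` onto `F`. -/
lemma exists_nonexpansive_retraction {X : Type v} [NormedAddCommGroup X] [NormedSpace ℝ X]
    {K F : Set (WeakDual ℝ X)} (hK : IsCompact K) (hFK : F ⊆ K)
    (h : ∀ x, ∃ T ∈ nonexpansiveFixing K F, T x ∈ F) :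
    ∃ r ∈ nonexpansiveFixing K F, ∀ x, r x ∈ F := by
  let Γ := nonexpansiveFixing K F
  let le : Γ → Γ → Prop := fun T U => ∀ x y,
    ‖toStrongDual (U.1 x) - toStrongDual (U.1 y)‖ ≤ ‖toStrongDual (T.1 x) - toStrongDual (T.1 y)‖
  have hid : (fun x : K => (x : WeakDual ℝ X)) ∈ Γ :=
    ⟨fun x => x.2, fun x y => le_rfl, fun x _ => rfl⟩
  obtain ⟨⟨r, hr⟩, hmax⟩ : ∃ r : Γ, ∀ T, le r T → le T r := by
    refine exists_maximal_of_chains_bounded (fun c hc => ?_) fun {T U W} hTU hUW x y =>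
      (hUW x y).trans (hTU x y)
    rcases c.eq_empty_or_nonempty with rfl | hcne
    · exact ⟨⟨_, hid⟩, by simp⟩
    have : Nonempty c := hcne.to_subtype
    let G : c → Set (K → WeakDual ℝ X) := fun T => Γ ∩
      {U | ∀ x y, ‖toStrongDual (U x) - toStrongDual (U y)‖ ≤
        ‖toStrongDual (T.1.1 x) - toStrongDual (T.1.1 y)‖}
    have hGcl : ∀ T, IsClosed (G T) := fun T => (isCompact_nonexpansiveFixing hK).isClosed.inter
      (isClosed_setOf_norm_toStrongDual_apply_sub_le _)
    have hmono : ∀ T U : c, le T.1 U.1 → G U ⊆ G T := fun T U hTU W hW =>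
      ⟨hW.1, fun x y => (hW.2 x y).trans (hTU x y)⟩
    obtain ⟨U, hU⟩ := IsCompact.nonempty_iInter_of_directed_nonempty_isCompact_isClosed G
      (by
        intro T U
        by_cases hTU : T = U
        · exact ⟨T, subset_rfl, hTU ▸ subset_rfl⟩
        rcases hc T.2 U.2 (fun h => hTU (Subtype.ext h)) with h | h
        · exact ⟨U, hmono _ _ h, subset_rfl⟩
        · exact ⟨T, subset_rfl, hmono _ _ h⟩)
      (fun T => ⟨T.1.1, T.1.2, fun _ _ => le_rfl⟩)
      (fun T => (isCompact_nonexpansiveFixing hK).of_isClosed_subset (hGcl T) inter_subset_left)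
      hGcl
    rw [mem_iInter] at hU
    exact ⟨⟨U, (hU hcne.to_subtype.some).1⟩, fun T hT => (hU ⟨T, hT⟩).2⟩
  refine ⟨r, hr, fun x => ?_⟩
  obtain ⟨T, hT, hTx⟩ := h ⟨r x, hr.1 x⟩
  let U : K → WeakDual ℝ X := fun y => T ⟨r y, hr.1 y⟩
  have hU : U ∈ Γ := by
    refine ⟨fun y => hT.1 _, fun y z => (hT.2.1 _ _).trans (hr.2.1 y z), fun y hy => ?_⟩
    have h1 : (⟨r y, hr.1 y⟩ : K) = y := Subtype.ext (hr.2.2 y hy)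
    change T ⟨r y, hr.1 y⟩ = y
    rw [h1, hT.2.2 y hy]
  let p : K := ⟨T ⟨r x, hr.1 x⟩, hFK hTx⟩
  have h2 : ‖toStrongDual (r x) - toStrongDual (r p)‖ ≤ ‖toStrongDual (U x) - toStrongDual (U p)‖ :=
    hmax ⟨U, hU⟩ (fun y z => hT.2.1 _ _) x p
  have h3 : U p = p := hU.2.2 p hTx
  have h4 : U x = p := rfl
  have h5 : r p = p := hr.2.2 p hTx
  rw [h3, h4, h5, sub_self, norm_zero] at h2
  have h6 := toStrongDual.injective (sub_eq_zero.1 (norm_le_zero_iff.1 h2))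
  rw [h6]
  exact hTx

open WeakDual in
lemma MEmbeddedSpace.exists_nonexpansive_retraction_fixedPoints {S : Type u} [Semigroup S]
    [TopologicalSpace S] (hLIM : HasLIM S (LUCset S)) {X : Type v} [NormedAddCommGroup X]
    [NormedSpace ℝ X] [CompleteSpace X] (hM : MEmbeddedSpace X) {K : Set (WeakDual ℝ X)}
    {π : S → WeakDual ℝ X → WeakDual ℝ X}
    (hKcv : Convex ℝ K) (hK : IsCompact K)
    (hinv : ∀ s, MapsTo (π s) K K)
    (hact : ∀ s t, ∀ x ∈ K, π (s * t) x = π s (π t x))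
    (hne : ∀ s, ∀ x ∈ K, ∀ y ∈ K,
      ‖toStrongDual (π s x) - toStrongDual (π s y)‖ ≤ ‖toStrongDual x - toStrongDual y‖)
    (hπ : ContinuousOn (fun q : S × WeakDual ℝ X => π q.1 q.2) (univ ×ˢ K)) :
    ∃ r ∈ nonexpansiveFixing K {x ∈ K | ∀ s, π s x = x}, ∀ x, r x ∈ {x ∈ K | ∀ s, π s x = x} := by
  refine exists_nonexpansive_retraction hK (fun x hx => hx.1) fun x => ?_
  set Γ := nonexpansiveFixing K {x ∈ K | ∀ s, π s x = x}
  have hsub : (fun T : K → WeakDual ℝ X => T x) '' Γ ⊆ K := by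
    rintro _ ⟨T, hT, rfl⟩
    exact hT.1 x
  obtain ⟨_, ⟨T, hT, rfl⟩, hfix⟩ := hM.exists_fixedPoint hLIM (π := π)
    (K := (fun T : K → WeakDual ℝ X => T x) '' Γ)
    ⟨x, _, ⟨fun x => x.2, fun x y => le_rfl, fun x _ => rfl⟩, rfl⟩
    ((convex_nonexpansiveFixing hKcv).linear_image (LinearMap.proj x))
    ((isCompact_nonexpansiveFixing hK).image (continuous_apply x))
    (by
      rintro s _ ⟨T, hT, rfl⟩
      refine ⟨fun y => π s (T y), ⟨fun y => hinv s (hT.1 y), fun y z =>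
        (hne s _ (hT.1 y) _ (hT.1 z)).trans (hT.2.1 y z), fun y hy => ?_⟩, rfl⟩
      change π s (T y) = y
      rw [hT.2.2 y hy, hy.2 s])
    (fun s t y hy => hact s t y (hsub hy))
    (fun s y hy z hz => hne s y (hsub hy) z (hsub hz))
    (hπ.mono (prod_mono_right hsub))
  exact ⟨T, hT, hT.1 x, hfix⟩

/-- **Theorem (M), case (v)**: a nonexpansive, jointly weak* continuous dynamical system
`(S,(K,weak*))` on a weak* compact convex subset of the dual of an `M`-embedded Banach space has
a common fixed point provided `LUC(S)` has a left invariant mean; moreover the fixed point set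
is a nonexpansive retract of `K`. -/
theorem fixedPoint_and_retract_MEmbedded_of_LUC_hasLIM
    {S : Type u} [Semigroup S] [TopologicalSpace S] [T2Space S]
    (hS : IsSemitopologicalSemigroup S)
    {X : Type v} [NormedAddCommGroup X] [NormedSpace ℝ X] [CompleteSpace X]
    -- `X` is an `M`-embedded Banach space
    (hM : MEmbeddedSpace X)
    (K : Set (StrongDual ℝ X)) (π : S → StrongDual ℝ X → StrongDual ℝ X)
    -- `K` is a nonempty weak* compact convex set
    (hKne : K.Nonempty) (hKcv : Convex ℝ K) (hKcpt : @IsCompact _ (wstarTop X) K)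
    -- `(S,(K,weak*))` is a dynamical system
    (hinv : ∀ s : S, MapsTo (π s) K K)
    (hact : ∀ s t : S, ∀ x ∈ K, π (s * t) x = π s (π t x))
    (horb : ∀ x ∈ K, @Continuous S _ _ (wstarTop X) fun s => π s x)
    (htra : ∀ s : S, @ContinuousOn _ _ (wstarTop X) (wstarTop X) (π s) K)
    -- the system is nonexpansive
    (hne : ∀ s : S, ∀ x ∈ K, ∀ y ∈ K, ‖π s x - π s y‖ ≤ ‖x - y‖)
    -- the action is jointly continuous when `K` carries the weak* topology
    (hjoint : @ContinuousOn (S × StrongDual ℝ X) _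
      (@instTopologicalSpaceProd S _ _ (wstarTop X)) (wstarTop X)
      (fun q => π q.1 q.2) (Set.univ ×ˢ K))
    -- the amenability hypothesis
    (hLIM : HasLIM S (LUCset S)) :
    -- `S` has a fixed point in `K` ...
    (∃ x ∈ K, ∀ s : S, π s x = x) ∧
    -- ... and `F(S)` is a nonexpansive retract of `K`
    ∃ r : StrongDual ℝ X → StrongDual ℝ X,
      (∀ x ∈ K, r x ∈ K ∧ ∀ s : S, π s (r x) = r x) ∧
      (∀ x ∈ K, r (r x) = r x) ∧
      (∀ x ∈ K, (∀ s : S, π s x = x) → r x = x) ∧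
      (∀ x ∈ K, ∀ y ∈ K, ‖r x - r y‖ ≤ ‖x - y‖) := by
  obtain ⟨x, hx, hfix⟩ := hM.exists_fixedPoint hLIM (K := K) (π := π) hKne hKcv hKcpt hinv hact
    hne hjoint
  obtain ⟨r, hr, hrF⟩ := hM.exists_nonexpansive_retraction_fixedPoints hLIM (K := K) (π := π)
    hKcv hKcpt hinv hact hne hjoint
  refine ⟨⟨x, hx, hfix⟩, ?_⟩
  classical
  let ρ : StrongDual ℝ X → StrongDual ℝ X := fun y =>
    if h : y ∈ K then WeakDual.toStrongDual (r ⟨y, h⟩) else y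
  have hρ : ∀ y (h : y ∈ K), ρ y = WeakDual.toStrongDual (r ⟨y, h⟩) := fun y h => dif_pos h
  have hρF : ∀ y ∈ K, ρ y ∈ K ∧ ∀ s : S, π s (ρ y) = ρ y := fun y hy => by
    rw [hρ y hy]
    exact hrF ⟨y, hy⟩
  have hρfix : ∀ y ∈ K, (∀ s : S, π s y = y) → ρ y = y := fun y hy hys => by
    rw [hρ y hy]
    exact hr.2.2 ⟨y, hy⟩ ⟨hy, hys⟩
  refine ⟨ρ, hρF, fun y hy => hρfix _ (hρF y hy).1 (hρF y hy).2, hρfix, fun y hy z hz => ?_⟩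
  rw [hρ y hy, hρ z hz]
  exact hr.2.1 ⟨y, hy⟩ ⟨z, hz⟩
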